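/- For every complex number q with 0 < |q| < 1, one has ∑_{i,j,k,l ≥ 0} q^{i²+j²+k²+l²+il−jl−kl−i+j−k} / ((q²;q²)_i (q²;q²)_j (q²;q²)_k (q²;q²)_l) = 4 J_4³ J_{12,28} / J_2⁴ + J_2⁶ J_14 J_28⁵ / (J_1³ J_4³ J_{1,28} J_{4,28} J_{7,28} J_{10,28} J_{12,28} J_{13,28}). -/

import Mathlib

open scoped BigOperators

/-- The infinite q-Pochhammer symbol `(a; q)_∞ = ∏_{k=0}^∞ (1 - a q^k)`. -/
noncomputable def qPochInf (a q : ℂ) : ℂ := ∏' n : ℕ, (1 - a * q ^ n)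

/-- The finite q-Pochhammer symbol `(a; q)_n = ∏_{k=0}^{n-1} (1 - a q^k)`. -/
noncomputable def qPoch (a q : ℂ) (n : ℕ) : ℂ :=
  Finset.prod (Finset.range n) (fun k => 1 - a * q ^ k)

/-- `J_m = (q^m; q^m)_∞`. -/
noncomputable def J (q : ℂ) (m : ℕ) : ℂ := qPochInf (q ^ m) (q ^ m)

/-- `J_{a,m} = (q^a; q^m)_∞ (q^{m-a}; q^m)_∞ (q^m; q^m)_∞`. -/
noncomputable def Jam (q : ℂ) (a m : ℕ) : ℂ :=
  qPochInf (q ^ a) (q ^ m) * qPochInf (q ^ (m - a)) (q ^ m) * qPochInf (q ^ m) (q ^ m)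

/-!
The linear terms of the exponent are such that, for fixed `l`, Euler's expansion of `(-z; q)_∞` in
base `q ^ 2` sums the series over `i`, `j` and `k` to
`(-q ^ l; q ^ 2)_∞ (-q ^ (2 - l); q ^ 2)_∞ (-q ^ (-l); q ^ 2)_∞`. Up to a factor depending only on
the parity of `l`, this is a power of `q` times a finite product. The sum over even `l` thus becomes
Slater's identity (61) in base `q ^ 2`, and the sum over odd `l` a Rogers–Selberg identity modulo 7
in base `-q`. Both follow by Bailey's lemma from Bailey pairs that are verified with telescoping
certificates, and Jacobi's triple product evaluates the resulting theta series.
-/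

open Filter Topology

section Series

lemma tsum_natCast_eq_tsum_int {E : Type*} [AddCommMonoid E] [TopologicalSpace E] {f : ℤ → E}
    (hf : ∀ n < 0, f n = 0) : ∑' n : ℕ, f n = ∑' n : ℤ, f n :=
  Nat.cast_injective.tsum_eq fun n hn ↦ by
    have hn' : 0 ≤ n := not_lt.mp fun h ↦ hn (hf n h)
    exact ⟨n.toNat, Int.toNat_of_nonneg hn'⟩

lemma tsum_eq_tsum_of_sub_telescopes {E : Type*} [AddCommGroup E] [TopologicalSpace E]
    [T2Space E] [IsTopologicalAddGroup E] {f g G : ℤ → E} (hf : Summable f) (hg : Summable g)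
    (hG : Summable G) (h : ∀ n, f n - g n = G (n + 1) - G n) :
    ∑' n, f n = ∑' n, g n := by
  have hG' : Summable fun n ↦ G (n + 1) := (Equiv.addRight (1 : ℤ)).summable_iff.mpr hG
  rw [← sub_eq_zero, ← hf.tsum_sub hg, tsum_congr h, hG'.tsum_sub hG, sub_eq_zero]
  exact (Equiv.addRight (1 : ℤ)).tsum_eq G

lemma summable_mul_of_norm_le {ι : Type*} {f g : ι → ℂ} {C : ℝ} (hf : Summable f)
    (hg : ∀ i, ‖g i‖ ≤ C) : Summable fun i ↦ f i * g i :=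
  .of_norm_bounded (hf.norm.mul_right C) fun i ↦ by
    rw [norm_mul]
    exact mul_le_mul_of_nonneg_left (hg i) (norm_nonneg _)

lemma hasSum_mul {ι κ : Type*} {f : ι → ℂ} {g : κ → ℂ} {a b : ℂ} (hf : HasSum f a)
    (hg : HasSum g b) : HasSum (fun p : ι × κ ↦ f p.1 * g p.2) (a * b) :=
  hf.mul hg (summable_mul_of_summable_norm hf.summable.norm hg.summable.norm)

lemma pow_zpow_eq_zpow_pow {G : Type*} [DivisionMonoid G] (x : G) (a : ℕ) (n : ℤ) :
    (x ^ a) ^ n = (x ^ n) ^ a := by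
  simpa only [zpow_natCast] using zpow_comm x a n

lemma norm_pow_lt_one {R : Type*} [NormedDivisionRing R] {x : R} (hx : ‖x‖ < 1) {n : ℕ}
    (hn : n ≠ 0) : ‖x ^ n‖ < 1 := by
  rw [norm_pow]
  exact pow_lt_one₀ (norm_nonneg x) hx hn

lemma one_sub_ne_zero_of_norm_lt_one {R : Type*} [NormedDivisionRing R] {x : R} (hx : ‖x‖ < 1) :
    1 - x ≠ 0 := fun h ↦ by
  rw [← sub_eq_zero.mp h, norm_one] at hx
  exact lt_irrefl 1 hx

lemma one_add_ne_zero_of_norm_lt_one {R : Type*} [NormedDivisionRing R] {x : R} (hx : ‖x‖ < 1) :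
    1 + x ≠ 0 := by
  simpa only [sub_neg_eq_add] using one_sub_ne_zero_of_norm_lt_one (x := -x) (by rwa [norm_neg])

end Series

section QPochhammer

variable {q : ℂ}

@[simp] lemma qPoch_zero (a q : ℂ) : qPoch a q 0 = 1 :=
  Finset.prod_range_zero _

lemma qPoch_succ (a q : ℂ) (n : ℕ) : qPoch a q (n + 1) = qPoch a q n * (1 - a * q ^ n) :=
  Finset.prod_range_succ _ n

lemma qPoch_succ_eq_mul (a q : ℂ) (n : ℕ) : qPoch a q (n + 1) = (1 - a) * qPoch (a * q) q n := by
  rw [qPoch, Finset.prod_range_succ', pow_zero, mul_one, mul_comm, qPoch]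
  congr! 3
  ring

lemma qPoch_self_ne_zero (hq : ‖q‖ < 1) (n : ℕ) : qPoch q q n ≠ 0 :=
  Finset.prod_ne_zero_iff.mpr fun k _ ↦ by
    rw [← pow_succ']
    exact one_sub_ne_zero_of_norm_lt_one (norm_pow_lt_one hq k.succ_ne_zero)

lemma qPoch_mul_eq_prod (a q : ℂ) (k N : ℕ) :
    qPoch a q (k * N) = ∏ j ∈ Finset.range k, qPoch (a * q ^ j) (q ^ k) N := by
  induction N with
  | zero => simp
  | succ N ih =>
    simp only [qPoch_succ, Finset.prod_mul_distrib, ← ih]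
    rw [mul_add_one, qPoch, Finset.prod_range_add, ← qPoch]
    congr! 3 with j
    ring

lemma summable_norm_mul_pow (a : ℂ) (hq : ‖q‖ < 1) : Summable fun n : ℕ ↦ ‖-(a * q ^ n)‖ := by
  simp only [norm_neg, norm_mul, norm_pow]
  exact (summable_geometric_of_lt_one (norm_nonneg q) hq).mul_left ‖a‖

lemma multipliable_one_sub_mul_pow (a : ℂ) (hq : ‖q‖ < 1) :
    Multipliable fun n : ℕ ↦ 1 - a * q ^ n := by
  simpa only [sub_eq_add_neg] using multipliable_one_add_of_summable (summable_norm_mul_pow a hq)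

lemma tendsto_qPoch (a : ℂ) (hq : ‖q‖ < 1) :
    Tendsto (qPoch a q) atTop (𝓝 (qPochInf a q)) :=
  (multipliable_one_sub_mul_pow a hq).tendsto_prod_tprod_nat

lemma qPochInf_ne_zero {a : ℂ} (ha : ‖a‖ < 1) (hq : ‖q‖ < 1) : qPochInf a q ≠ 0 := by
  have hfactor (n : ℕ) : 1 + -(a * q ^ n) ≠ 0 := by
    rw [← sub_eq_add_neg]
    refine one_sub_ne_zero_of_norm_lt_one ?_
    rw [norm_mul, norm_pow]
    exact mul_lt_one_of_nonneg_of_lt_one_left (norm_nonneg a) ha (pow_le_one₀ (norm_nonneg q) hq.le)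
  simpa only [qPochInf, sub_eq_add_neg] using
    tprod_one_add_ne_zero_of_summable hfactor (summable_norm_mul_pow a hq)

lemma qPochInf_eq_mul (a : ℂ) (hq : ‖q‖ < 1) :
    qPochInf a q = (1 - a) * qPochInf (a * q) q := by
  have hshift (n : ℕ) : 1 - a * q ^ (n + 1) = 1 - a * q * q ^ n := by ring
  have hmul : Multipliable fun n : ℕ ↦ 1 - a * q ^ (n + 1) := by
    simpa only [hshift] using multipliable_one_sub_mul_pow (a * q) hq
  have hsplit := tprod_eq_zero_mul' (f := fun n ↦ 1 - a * q ^ n) hmul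
  simpa only [qPochInf, hshift, pow_zero, mul_one] using hsplit

lemma qPochInf_mul_qPochInf_neg (a : ℂ) (hq : ‖q‖ < 1) :
    qPochInf a q * qPochInf (-a) q = qPochInf (a ^ 2) (q ^ 2) := by
  rw [qPochInf, qPochInf, ← (multipliable_one_sub_mul_pow a hq).tprod_mul
    (multipliable_one_sub_mul_pow (-a) hq)]
  exact tprod_congr fun n ↦ by ring

lemma qPochInf_eq_prod (a : ℂ) (hq : ‖q‖ < 1) {k : ℕ} (hk : k ≠ 0) :
    qPochInf a q = ∏ j ∈ Finset.range k, qPochInf (a * q ^ j) (q ^ k) := by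
  have hmultiples : Tendsto (fun N ↦ qPoch a q (k * N)) atTop (𝓝 (qPochInf a q)) :=
    (tendsto_qPoch a hq).comp (tendsto_id.const_mul_atTop' (Nat.pos_of_ne_zero hk))
  simp only [qPoch_mul_eq_prod] at hmultiples
  exact tendsto_nhds_unique hmultiples
    (tendsto_finsetProd _ fun j _ ↦ tendsto_qPoch _ (norm_pow_lt_one hq hk))

end QPochhammer

section Theta

/-- The triangular numbers `n.choose 2 = n (n - 1) / 2`, extended to all integers `n`. -/
def tri (n : ℤ) : ℤ := n * (n - 1) / 2

lemma two_mul_tri (n : ℤ) : 2 * tri n = n * (n - 1) := by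
  refine Int.mul_ediv_cancel' (even_iff_two_dvd.mp ?_)
  simpa only [sub_add_cancel, mul_comm] using Int.even_mul_succ_self (n - 1)

lemma tri_add_one (n : ℤ) : tri (n + 1) = tri n + n := by
  linarith [two_mul_tri n, two_mul_tri (n + 1)]

lemma tri_neg (n : ℤ) : tri (-n) = tri n + n := by
  linarith [two_mul_tri n, two_mul_tri (-n)]

/-- The `n`-th term of Ramanujan's theta series `theta q z`. -/
noncomputable def thetaTerm (q z : ℂ) (n : ℤ) : ℂ := q ^ tri n * z ^ n

/-- The theta function `∑ q ^ (n (n - 1) / 2) z ^ n`, summed over all integers `n`; the function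
`j(x; q)` of Hickerson and Mortenson is `theta q (-x)`. -/
noncomputable def theta (q z : ℂ) : ℂ := ∑' n : ℤ, thetaTerm q z n

variable {q q' z z' : ℂ}

@[simp] lemma thetaTerm_zero (q z : ℂ) : thetaTerm q z 0 = 1 := by
  simp [thetaTerm, tri]

lemma thetaTerm_ne_zero (hq0 : q ≠ 0) (hz : z ≠ 0) (n : ℤ) : thetaTerm q z n ≠ 0 :=
  mul_ne_zero (zpow_ne_zero _ hq0) (zpow_ne_zero _ hz)

lemma thetaTerm_add_one (hq0 : q ≠ 0) (hz : z ≠ 0) (n : ℤ) :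
    thetaTerm q z (n + 1) = z * q ^ n * thetaTerm q z n := by
  rw [thetaTerm, thetaTerm, tri_add_one, zpow_add₀ hq0, zpow_add_one₀ hz]
  ring

lemma thetaTerm_mul_thetaTerm (q z q' z' : ℂ) (n : ℤ) :
    thetaTerm q z n * thetaTerm q' z' n = thetaTerm (q * q') (z * z') n := by
  simp only [thetaTerm, mul_zpow]
  ring

lemma thetaTerm_mul_right (q z w : ℂ) (n : ℤ) :
    thetaTerm q (z * w) n = thetaTerm q z n * w ^ n := by
  rw [thetaTerm, thetaTerm, mul_zpow, mul_assoc]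

lemma thetaTerm_neg_pow (q w : ℂ) (a : ℕ) (n : ℤ) :
    thetaTerm q (-w ^ a) n = thetaTerm q (-1) n * (w ^ n) ^ a := by
  rw [← pow_zpow_eq_zpow_pow, ← thetaTerm_mul_right, neg_one_mul]

lemma thetaTerm_neg (hq0 : q ≠ 0) (n : ℤ) : thetaTerm q z (-n) = thetaTerm q (q / z) n := by
  rw [thetaTerm, thetaTerm, tri_neg, zpow_add₀ hq0, div_zpow, zpow_neg]
  ring

lemma zpow_mul_add_eq_thetaTerm (hq0 : q ≠ 0) (c n : ℤ) :
    q ^ (n * (n + c)) = thetaTerm (q ^ 2) (q ^ (c + 1)) n := by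
  have hexp : n * (n + c) = ((2 : ℕ) : ℤ) * tri n + (c + 1) * n := by
    push_cast
    linear_combination -two_mul_tri n
  rw [hexp, zpow_add₀ hq0, zpow_mul, zpow_mul, zpow_natCast, thetaTerm]

lemma summable_thetaTerm_natCast (hq0 : q ≠ 0) (hq : ‖q‖ < 1) (hz : z ≠ 0) :
    Summable fun n : ℕ ↦ thetaTerm q z n := by
  have hratio (n : ℕ) : ‖thetaTerm q z (n + 1 : ℕ)‖ / ‖thetaTerm q z n‖ = ‖z‖ * ‖q‖ ^ n := by
    rw [Nat.cast_succ, thetaTerm_add_one hq0 hz, norm_mul, zpow_natCast, norm_mul, norm_pow]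
    exact mul_div_cancel_right₀ _ (norm_ne_zero_iff.mpr (thetaTerm_ne_zero hq0 hz n))
  refine summable_of_ratio_test_tendsto_lt_one zero_lt_one
    (.of_forall fun n ↦ thetaTerm_ne_zero hq0 hz n) ?_
  simp only [hratio]
  simpa using (tendsto_pow_atTop_nhds_zero_of_lt_one (norm_nonneg q) hq).const_mul ‖z‖

lemma summable_thetaTerm (hq0 : q ≠ 0) (hq : ‖q‖ < 1) (hz : z ≠ 0) :
    Summable (thetaTerm q z) := by
  refine .of_nat_of_neg (summable_thetaTerm_natCast hq0 hq hz) ?_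
  simp only [thetaTerm_neg hq0]
  exact summable_thetaTerm_natCast hq0 hq (div_ne_zero hq0 hz)

lemma summable_thetaTerm_neg_pow (hq0 : q ≠ 0) (hq : ‖q‖ < 1) {a : ℕ} (ha : a ≠ 0) (b : ℕ) :
    Summable (thetaTerm (q ^ a) (-q ^ b)) :=
  summable_thetaTerm (pow_ne_zero a hq0) (norm_pow_lt_one hq ha)
    (neg_ne_zero.mpr (pow_ne_zero b hq0))

end Theta

section InverseFactorial

/-- The inverse `q`-factorial `1 / (q; q)_k`, extended by `0` to negative integers `k`. -/
noncomputable def qPochInv (q : ℂ) (k : ℤ) : ℂ := if k < 0 then 0 else (qPoch q q k.toNat)⁻¹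

variable {q : ℂ}

lemma qPochInv_natCast (q : ℂ) (n : ℕ) : qPochInv q n = (qPoch q q n)⁻¹ := by
  simp [qPochInv]

lemma qPochInv_of_neg (q : ℂ) {k : ℤ} (hk : k < 0) : qPochInv q k = 0 :=
  if_pos hk

@[simp] lemma qPochInv_zero (q : ℂ) : qPochInv q 0 = 1 := by
  simp [qPochInv]

lemma qPochInv_sub_one (hq : ‖q‖ < 1) (k : ℤ) :
    qPochInv q (k - 1) = (1 - q ^ k) * qPochInv q k := by
  rcases lt_trichotomy k 0 with hk | rfl | hk
  · rw [qPochInv_of_neg q hk, qPochInv_of_neg q (by lia), mul_zero]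
  · rw [qPochInv_of_neg q (by lia), zpow_zero, sub_self, zero_mul]
  · obtain ⟨n, rfl⟩ : ∃ n : ℕ, k = (n + 1 : ℕ) := ⟨(k - 1).toNat, by lia⟩
    have hfactor := qPoch_self_ne_zero hq (n + 1)
    rw [qPoch_succ, ← pow_succ'] at hfactor
    rw [qPochInv_natCast, qPoch_succ, ← pow_succ', Nat.cast_succ, add_sub_cancel_right,
      qPochInv_natCast, ← Nat.cast_succ, zpow_natCast, mul_inv_rev, mul_inv_cancel_left₀]
    exact right_ne_zero_of_mul hfactor

lemma exists_norm_qPochInv_le (hq : ‖q‖ < 1) : ∃ C, ∀ k, ‖qPochInv q k‖ ≤ C := by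
  have hlim := (tendsto_qPoch q hq).inv₀ (qPochInf_ne_zero hq hq)
  obtain ⟨C, hC⟩ := hlim.norm.bddAbove_range
  refine ⟨C, fun k ↦ ?_⟩
  rcases lt_or_ge k 0 with hk | hk
  · rw [qPochInv_of_neg q hk, norm_zero]
    exact (norm_nonneg _).trans (hC ⟨0, rfl⟩)
  · lift k to ℕ using hk
    rw [qPochInv_natCast]
    exact hC ⟨k, rfl⟩

variable {ι : Type*} {α : ι → ℂ}

lemma summable_mul_qPochInv (hq : ‖q‖ < 1) (hα : Summable α) (a : ι → ℤ) :
    Summable fun r ↦ α r * qPochInv q (a r) :=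
  let ⟨_, hC⟩ := exists_norm_qPochInv_le hq
  summable_mul_of_norm_le hα fun r ↦ hC (a r)

lemma summable_mul_qPochInv_mul_qPochInv (hq : ‖q‖ < 1) (hα : Summable α) (a b : ι → ℤ) :
    Summable fun r ↦ α r * (qPochInv q (a r) * qPochInv q (b r)) := by
  simpa only [mul_assoc] using
    summable_mul_qPochInv hq (summable_mul_qPochInv hq hα a) b

end InverseFactorial

section Euler

variable {q z : ℂ}

lemma tendsto_tsum_mul_mul_pow (hq : ‖q‖ < 1) {a : ℕ → ℂ} {b : ℕ → ℕ → ℂ} {C : ℝ} {L : ℂ}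
    (ha : Summable a) (hb : ∀ N n, ‖b N n‖ ≤ C) (hb0 : Tendsto (b · 0) atTop (𝓝 L)) :
    Tendsto (fun N ↦ ∑' n, a n * (b N n * (q ^ N) ^ n)) atTop (𝓝 (a 0 * L)) := by
  have hlim : ∑' n, (if n = 0 then a 0 * L else 0) = a 0 * L := tsum_ite_eq 0 _
  rw [← hlim]
  refine tendsto_tsum_of_dominated_convergence (ha.norm.mul_right C) (fun n ↦ ?_)
    (.of_forall fun N n ↦ ?_)
  · split_ifs with hn
    · simpa [hn] using hb0.const_mul (a 0)
    · have hpow : Tendsto (fun N ↦ (q ^ N) ^ n) atTop (𝓝 0) := by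
        simpa [hn] using (tendsto_pow_atTop_nhds_zero_of_norm_lt_one hq).pow n
      have hbdd : IsBoundedUnder (· ≤ ·) atTop (norm ∘ (b · n)) :=
        isBoundedUnder_of ⟨C, fun N ↦ hb N n⟩
      simpa using (isBoundedUnder_le_mul_tendsto_zero hbdd hpow).const_mul (a n)
  · have hpow : ‖(q ^ N) ^ n‖ ≤ 1 := by
      rw [norm_pow, norm_pow]
      exact pow_le_one₀ (by positivity) (pow_le_one₀ (norm_nonneg q) hq.le)
    calc ‖a n * (b N n * (q ^ N) ^ n)‖ = ‖a n‖ * (‖b N n‖ * ‖(q ^ N) ^ n‖) := by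
          rw [norm_mul, norm_mul]
      _ ≤ ‖a n‖ * C := by
          gcongr
          exact (mul_le_of_le_one_right (norm_nonneg _) hpow).trans (hb N n)

lemma summable_thetaTerm_mul_qPochInv (hq0 : q ≠ 0) (hq : ‖q‖ < 1) (hz : z ≠ 0) (c : ℤ) :
    Summable fun n : ℤ ↦ thetaTerm q z n * qPochInv q (n + c) :=
  summable_mul_qPochInv hq (summable_thetaTerm hq0 hq hz) _

lemma tsum_thetaTerm_mul_qPochInv_eq_mul (hq0 : q ≠ 0) (hq : ‖q‖ < 1) (hz : z ≠ 0) :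
    ∑' n, thetaTerm q z n * qPochInv q n =
      (1 + z) * ∑' n, thetaTerm q (z * q) n * qPochInv q n := by
  have hsum {x : ℂ} (hx : x ≠ 0) := summable_thetaTerm_mul_qPochInv hq0 hq hx 0
  have hG := summable_thetaTerm_mul_qPochInv hq0 hq hz (-1)
  simp only [add_zero, ← sub_eq_add_neg] at hsum hG
  rw [← tsum_mul_left]
  refine tsum_eq_tsum_of_sub_telescopes (hsum hz)
    ((hsum (mul_ne_zero hz hq0)).mul_left _) hG.neg fun n ↦ ?_
  rw [add_sub_cancel_right, qPochInv_sub_one hq, thetaTerm_add_one hq0 hz, thetaTerm_mul_right]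
  ring

lemma tsum_thetaTerm_mul_qPochInv_eq_qPoch_mul (hq0 : q ≠ 0) (hq : ‖q‖ < 1) (hz : z ≠ 0)
    (N : ℕ) :
    ∑' n, thetaTerm q z n * qPochInv q n =
      qPoch (-z) q N * ∑' n, thetaTerm q (z * q ^ N) n * qPochInv q n := by
  induction N with
  | zero => simp
  | succ N ih =>
    rw [ih, tsum_thetaTerm_mul_qPochInv_eq_mul hq0 hq (mul_ne_zero hz (pow_ne_zero N hq0)),
      qPoch_succ, pow_succ]
    ring_nf

lemma tsum_natCast_thetaTerm_mul_qPochInv (q z : ℂ) :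
    ∑' n : ℕ, thetaTerm q z n * qPochInv q n = ∑' n : ℤ, thetaTerm q z n * qPochInv q n :=
  tsum_natCast_eq_tsum_int (f := fun n ↦ thetaTerm q z n * qPochInv q n) fun n hn ↦ by
    simp only [qPochInv_of_neg q hn, mul_zero]

lemma tsum_thetaTerm_mul_qPochInv (hq0 : q ≠ 0) (hq : ‖q‖ < 1) (hz : z ≠ 0) :
    ∑' n, thetaTerm q z n * qPochInv q n = qPochInf (-z) q := by
  have hlim := tendsto_tsum_mul_mul_pow (b := fun _ _ ↦ 1) (C := 1) hq
    ((summable_thetaTerm_mul_qPochInv hq0 hq hz 0).comp_injective Nat.cast_injective)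
    (by simp) tendsto_const_nhds
  have hprod := (tendsto_qPoch (-z) hq).mul hlim
  simp only [Function.comp_apply, add_zero, one_mul, Nat.cast_zero, thetaTerm_zero, qPochInv_zero,
    mul_one] at hprod
  refine tendsto_nhds_unique (tendsto_const_nhds.congr fun N ↦ ?_) hprod
  rw [tsum_thetaTerm_mul_qPochInv_eq_qPoch_mul hq0 hq hz N,
    ← tsum_natCast_thetaTerm_mul_qPochInv]
  simp only [thetaTerm_mul_right, zpow_natCast, mul_right_comm]

end Euler

section Cauchy

variable {q : ℂ}

/-- The generating function `∑ q ^ (m (m + s)) / ((q; q)_m (q; q)_{m + s})` of Durfee rectangles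
with side difference `s`. -/
noncomputable def durfeeSum (q : ℂ) (s : ℤ) : ℂ :=
  ∑' m : ℤ, q ^ (m * (m + s)) * (qPochInv q m * qPochInv q (m + s))

lemma summable_zpow_mul_add (hq0 : q ≠ 0) (hq : ‖q‖ < 1) (s : ℤ) :
    Summable fun m : ℤ ↦ q ^ (m * (m + s)) := by
  simp only [zpow_mul_add_eq_thetaTerm hq0]
  exact summable_thetaTerm (pow_ne_zero 2 hq0) (norm_pow_lt_one hq two_ne_zero)
    (zpow_ne_zero _ hq0)

lemma durfeeSum_neg (q : ℂ) (s : ℤ) : durfeeSum q (-s) = durfeeSum q s := by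
  rw [durfeeSum, durfeeSum, ← (Equiv.addRight s).tsum_eq]
  refine tsum_congr fun m ↦ ?_
  rw [Equiv.coe_addRight, add_neg_cancel_right, mul_comm m, mul_comm (qPochInv q m)]

lemma durfeeSum_sub_durfeeSum_add_one (hq0 : q ≠ 0) (hq : ‖q‖ < 1) (s : ℤ) :
    durfeeSum q s - durfeeSum q (s + 1) =
      -q ^ (s + 1) * (durfeeSum q (s + 1) - durfeeSum q (s + 1 + 1)) := by
  have hsum (s c d : ℤ) : Summable fun m : ℤ ↦
      q ^ (m * (m + s)) * (qPochInv q (m + c) * qPochInv q (m + d)) :=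
    summable_mul_qPochInv_mul_qPochInv hq (summable_zpow_mul_add hq0 hq s) _ _
  have hdef (s : ℤ) : Summable fun m : ℤ ↦
      q ^ (m * (m + s)) * (qPochInv q m * qPochInv q (m + s)) := by
    simpa only [add_zero] using hsum s 0 s
  have h := tsum_eq_tsum_of_sub_telescopes ((hdef s).sub (hdef (s + 1)))
    (((hdef (s + 1)).sub (hdef (s + 1 + 1))).mul_left (-q ^ (s + 1))) (hsum s (-1) (s + 1)).neg
    fun m ↦ ?_
  · rwa [tsum_mul_left, (hdef _).tsum_sub (hdef _), (hdef _).tsum_sub (hdef _)] at h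
  · have hpow : q ^ (m * (m + (s + 1))) = q ^ (m * (m + s)) * q ^ m := by
      rw [← zpow_add₀ hq0]; ring_nf
    have hpow' : q ^ (m * (m + (s + 1 + 1))) = q ^ (m * (m + s)) * q ^ m * q ^ m := by
      rw [← zpow_add₀ hq0, ← zpow_add₀ hq0]; ring_nf
    have hpow_succ :
        q ^ ((m + 1) * (m + 1 + s)) = q ^ (m * (m + s)) * q ^ m * q ^ m * q ^ (s + 1) := by
      rw [← zpow_add₀ hq0, ← zpow_add₀ hq0, ← zpow_add₀ hq0]; ring_nf
    have hpred := qPochInv_sub_one hq m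
    have hstep := qPochInv_sub_one hq (m + (s + 1))
    have hstep' := qPochInv_sub_one hq (m + (s + 1 + 1))
    rw [show m + (s + 1) - 1 = m + s by ring, zpow_add₀ hq0] at hstep
    rw [show m + (s + 1 + 1) - 1 = m + (s + 1) by ring, zpow_add₀ hq0, zpow_add_one₀ hq0] at hstep'
    rw [add_neg_cancel_right, show m + 1 + (s + 1) = m + (s + 1 + 1) by ring, ← sub_eq_add_neg m,
      hpow, hpow', hpow_succ, hpred, hstep, hstep']
    ring

lemma tendsto_durfeeSum (hq0 : q ≠ 0) (hq : ‖q‖ < 1) :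
    Tendsto (fun s : ℕ ↦ durfeeSum q s) atTop (𝓝 (qPochInf q q)⁻¹) := by
  obtain ⟨C, hC⟩ := exists_norm_qPochInv_le hq
  have hlim := (tendsto_qPoch q hq).inv₀ (qPochInf_ne_zero hq hq)
  have ha : Summable fun m : ℕ ↦ q ^ ((m : ℤ) * (m + 0)) * qPochInv q m :=
    (summable_mul_qPochInv hq (summable_zpow_mul_add hq0 hq 0) id).comp_injective
      Nat.cast_injective
  have h := tendsto_tsum_mul_mul_pow (b := fun s m ↦ qPochInv q (m + s)) hq ha (fun _ _ ↦ hC _)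
    (by simpa only [Nat.cast_zero, zero_add, qPochInv_natCast] using hlim)
  simp only [Nat.cast_zero, zero_mul, zpow_zero, qPochInv_zero, one_mul] at h
  refine h.congr fun s ↦ ?_
  rw [durfeeSum, ← tsum_natCast_eq_tsum_int fun m hm ↦ by
    rw [qPochInv_of_neg q hm, zero_mul, mul_zero]]
  refine tsum_congr fun m ↦ ?_
  have hpow : q ^ ((m : ℤ) * (m + s)) = q ^ ((m : ℤ) * (m + 0)) * (q ^ s) ^ m := by
    rw [← pow_mul, ← zpow_natCast q (s * m), ← zpow_add₀ hq0]
    push_cast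
    ring_nf
  rw [hpow]
  ring

lemma durfeeSum_natCast_add_one (hq0 : q ≠ 0) (hq : ‖q‖ < 1) (s : ℕ) :
    durfeeSum q (s + 1) = durfeeSum q s := by
  -- By the recurrence `‖D s‖` increases with `s`, but it tends to `0`.
  let D (s : ℕ) : ℂ := durfeeSum q s - durfeeSum q (s + 1)
  have hlim : Tendsto (fun s ↦ ‖D s‖) atTop (𝓝 0) := by
    have h := tendsto_durfeeSum hq0 hq
    simpa [D] using (h.sub ((tendsto_add_atTop_iff_nat 1).mpr h)).norm
  have hmono : Monotone fun s ↦ ‖D s‖ := monotone_nat_of_le_succ fun s ↦ by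
    have hpow : ‖-q ^ ((s : ℤ) + 1)‖ ≤ 1 := by
      rw [norm_neg, ← Nat.cast_succ, zpow_natCast]
      exact (norm_pow_lt_one hq s.succ_ne_zero).le
    calc ‖D s‖ = ‖-q ^ ((s : ℤ) + 1)‖ * ‖D (s + 1)‖ := by
          rw [← norm_mul]
          simp only [D, Nat.cast_succ, durfeeSum_sub_durfeeSum_add_one hq0 hq s]
      _ ≤ ‖D (s + 1)‖ := mul_le_of_le_one_left (norm_nonneg _) hpow
  have hD : D s = 0 := norm_le_zero_iff.mp (hmono.ge_of_tendsto hlim s)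
  exact (sub_eq_zero.mp hD).symm

theorem durfeeSum_eq (hq0 : q ≠ 0) (hq : ‖q‖ < 1) (s : ℤ) :
    durfeeSum q s = (qPochInf q q)⁻¹ := by
  have hconst (n : ℕ) : durfeeSum q n = durfeeSum q 0 := by
    induction n with
    | zero => rfl
    | succ n ih => rw [Nat.cast_succ, durfeeSum_natCast_add_one hq0 hq, ih]
  have hzero : durfeeSum q 0 = (qPochInf q q)⁻¹ :=
    tendsto_nhds_unique (tendsto_const_nhds.congr fun n ↦ (hconst n).symm)
      (tendsto_durfeeSum hq0 hq)
  obtain ⟨n, rfl | rfl⟩ := s.eq_nat_or_neg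
  · rw [hconst, hzero]
  · rw [durfeeSum_neg, hconst, hzero]

end Cauchy

section JacobiTripleProduct

variable {q z : ℂ}

lemma thetaTerm_add_mul_thetaTerm (hq0 : q ≠ 0) (hz : z ≠ 0) (s m : ℤ) :
    thetaTerm q z (m + s) * thetaTerm q (q / z) m = thetaTerm q z s * q ^ (m * (m + s)) := by
  have htri : tri (m + s) + tri m + m = tri s + m * (m + s) := by
    linarith [two_mul_tri (m + s), two_mul_tri m, two_mul_tri s]
  have hpow : z ^ (m + s) * (q / z) ^ m = z ^ s * q ^ m := by
    rw [zpow_add₀ hz, div_zpow]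
    field_simp [zpow_ne_zero m hz]
  calc thetaTerm q z (m + s) * thetaTerm q (q / z) m
      = q ^ (tri (m + s) + tri m) * (z ^ (m + s) * (q / z) ^ m) := by
        rw [thetaTerm, thetaTerm, zpow_add₀ hq0]; ring
    _ = q ^ (tri s + m * (m + s)) * z ^ s := by
        rw [hpow, ← htri, zpow_add₀ hq0 _ m]; ring
    _ = thetaTerm q z s * q ^ (m * (m + s)) := by
        rw [thetaTerm, zpow_add₀ hq0]; ring

theorem theta_eq_prod (hq0 : q ≠ 0) (hq : ‖q‖ < 1) (hz : z ≠ 0) :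
    theta q z = qPochInf (-z) q * qPochInf (-(q / z)) q * qPochInf q q := by
  have hqz : q / z ≠ 0 := div_ne_zero hq0 hz
  have hsum {x : ℂ} (hx : x ≠ 0) : Summable fun n ↦ ‖thetaTerm q x n * qPochInv q n‖ := by
    simpa only [add_zero] using (summable_thetaTerm_mul_qPochInv hq0 hq hx 0).norm
  let e : ℤ × ℤ ≃ ℤ × ℤ :=
    { toFun := fun p ↦ (p.2 + p.1, p.2)
      invFun := fun p ↦ (p.1 - p.2, p.2)
      left_inv := fun p ↦ by simp
      right_inv := fun p ↦ by simp }
  have hdouble := e.summable_iff.mpr (summable_mul_of_summable_norm (hsum hz) (hsum hqz))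
  simp only [Function.comp_def] at hdouble
  have hdiag : qPochInf (-z) q * qPochInf (-(q / z)) q = theta q z * (qPochInf q q)⁻¹ := by
    rw [← tsum_thetaTerm_mul_qPochInv hq0 hq hz, ← tsum_thetaTerm_mul_qPochInv hq0 hq hqz,
      tsum_mul_tsum_of_summable_norm (hsum hz) (hsum hqz), ← e.tsum_eq, hdouble.tsum_prod, theta,
      ← tsum_mul_right]
    refine tsum_congr fun s ↦ ?_
    rw [← durfeeSum_eq hq0 hq s, durfeeSum, ← tsum_mul_left]
    refine tsum_congr fun m ↦ ?_
    simp only [e, Equiv.coe_fn_mk]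
    rw [mul_mul_mul_comm, thetaTerm_add_mul_thetaTerm hq0 hz]
    ring
  rw [hdiag, inv_mul_cancel_right₀ (qPochInf_ne_zero hq hq)]

lemma Jam_eq_theta (hq0 : q ≠ 0) (hq : ‖q‖ < 1) {a m : ℕ} (hm : m ≠ 0) (ham : a ≤ m) :
    Jam q a m = theta (q ^ m) (-q ^ a) := by
  rw [theta_eq_prod (pow_ne_zero m hq0) (norm_pow_lt_one hq hm)
    (neg_ne_zero.mpr (pow_ne_zero a hq0)), neg_neg, div_neg, neg_neg, Jam, pow_sub₀ q hq0 ham,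
    div_eq_mul_inv]

end JacobiTripleProduct

section Bailey

/-- `(α, β)` is a Bailey pair relative to `q ^ c`. The sequence `α` is indexed by an arbitrary type
`ι`, its term `α r` occupying position `k r`, and the factor `(q; q)_c` of the usual definition is
absorbed into `β`. Terms with `k r` outside the classical range `0 ≤ k r ≤ n` are allowed. -/
def IsBaileyPair {ι : Type*} (q : ℂ) (c : ℤ) (k : ι → ℤ) (α : ι → ℂ) (β : ℕ → ℂ) : Prop :=
  ∀ n : ℕ, β n = ∑' r, α r * (qPochInv q (n - k r) * qPochInv q (n + k r + c))

variable {ι : Type*} {q : ℂ} {c : ℤ} {k : ι → ℤ} {α : ι → ℂ} {β : ℕ → ℂ}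

lemma qPochInv_mul_qPochInv_of_neg (hc : c ≤ 1) (k : ℤ) {n : ℤ} (hn : n < 0) :
    qPochInv q (n - k) * qPochInv q (n + k + c) = 0 := by
  rcases lt_or_ge (n - k) 0 with h | h
  · rw [qPochInv_of_neg q h, zero_mul]
  · rw [qPochInv_of_neg q (k := n + k + c) (by lia), mul_zero]

lemma tsum_zpow_mul_qPochInv (hq0 : q ≠ 0) (hq : ‖q‖ < 1) (c k : ℤ) :
    ∑' n : ℤ, q ^ (n * (n + c)) * (qPochInv q (n - k) * qPochInv q (n + k + c)) =
      q ^ (k * (k + c)) * (qPochInf q q)⁻¹ := by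
  rw [← durfeeSum_eq hq0 hq (2 * k + c), durfeeSum, ← tsum_mul_left, ← (Equiv.addRight k).tsum_eq]
  refine tsum_congr fun m ↦ ?_
  have hpow : q ^ ((m + k) * (m + k + c)) = q ^ (k * (k + c)) * q ^ (m * (m + (2 * k + c))) := by
    rw [← zpow_add₀ hq0]; ring_nf
  rw [Equiv.coe_addRight, add_sub_cancel_right, hpow, show m + k + k + c = m + (2 * k + c) by ring]
  ring

/-- Bailey's lemma in the limiting case where both free parameters tend to infinity. -/
theorem IsBaileyPair.tsum_eq (h : IsBaileyPair q c k α β) (hq0 : q ≠ 0) (hq : ‖q‖ < 1)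
    (hc : c ≤ 1) (hα : Summable α) :
    ∑' n : ℕ, q ^ ((n : ℤ) * (n + c)) * β n =
      (∑' r, q ^ (k r * (k r + c)) * α r) * (qPochInf q q)⁻¹ := by
  have hsum : Summable (Function.uncurry fun (n : ℤ) r ↦ q ^ (n * (n + c)) *
      (α r * (qPochInv q (n - k r) * qPochInv q (n + k r + c)))) := by
    simpa only [Function.uncurry_def, mul_assoc] using summable_mul_qPochInv_mul_qPochInv hq
      (summable_mul_of_summable_norm (summable_zpow_mul_add hq0 hq c).norm hα.norm)
      (fun p ↦ p.1 - k p.2) (fun p ↦ p.1 + k p.2 + c)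
  calc ∑' n : ℕ, q ^ ((n : ℤ) * (n + c)) * β n
      = ∑' n : ℤ, ∑' r, q ^ (n * (n + c)) *
          (α r * (qPochInv q (n - k r) * qPochInv q (n + k r + c))) := by
        rw [← tsum_natCast_eq_tsum_int fun n hn ↦ by
          simp only [qPochInv_mul_qPochInv_of_neg hc _ hn, mul_zero, tsum_zero]]
        exact tsum_congr fun n ↦ by rw [h n, tsum_mul_left]
    _ = ∑' r, ∑' n : ℤ, q ^ (n * (n + c)) *
          (α r * (qPochInv q (n - k r) * qPochInv q (n + k r + c))) := hsum.tsum_comm.symm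
    _ = (∑' r, q ^ (k r * (k r + c)) * α r) * (qPochInf q q)⁻¹ := by
        rw [← tsum_mul_right]
        refine tsum_congr fun r ↦ ?_
        rw [mul_right_comm, ← tsum_zpow_mul_qPochInv hq0 hq, ← tsum_mul_right]
        exact tsum_congr fun n ↦ by ring

end Bailey

section BaileyPairs

variable {ι : Type*} {q : ℂ} {c : ℤ}

/-- Paule's creative symmetrization, which lowers the order of the recurrence that
`IsBaileyPair.of_certificate` has to certify. -/
lemma IsBaileyPair.of_add_comp {k : ι → ℤ} {α : ι → ℂ} {β : ℕ → ℂ} (hq : ‖q‖ < 1)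
    (hα : Summable α) (σ : ι ≃ ι) (hσ : ∀ r, k (σ r) = -c - k r)
    (h : IsBaileyPair q c k (fun r ↦ α r + α (σ r)) fun n ↦ 2 * β n) :
    IsBaileyPair q c k α β := by
  intro n
  let f (r : ι) : ℂ := qPochInv q (n - k r) * qPochInv q (n + k r + c)
  have hf (r : ι) : f (σ r) = f r := by
    simp only [f, hσ]
    rw [mul_comm]
    ring_nf
  have hsum : Summable fun r ↦ α r * f r := summable_mul_qPochInv_mul_qPochInv hq hα _ _
  have hsum' : Summable fun r ↦ α (σ r) * f r := by
    simpa only [Function.comp_def, hf] using σ.summable_iff.mpr hsum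
  have hreflect : ∑' r, α (σ r) * f r = ∑' r, α r * f r := by
    simpa only [hf] using σ.tsum_eq fun r ↦ α r * f r
  have hdouble : 2 * β n = ∑' r, (α r * f r + α (σ r) * f r) := by
    simpa only [add_mul] using h n
  rw [hsum.tsum_add hsum', hreflect] at hdouble
  linear_combination hdouble / 2

/-- The Wilf–Zeilberger method, with certificate `G`. -/
lemma IsBaileyPair.of_certificate {k : ℤ → ℤ} {α : ℤ → ℂ} {β P : ℕ → ℂ} {G : ℕ → ℤ → ℂ}
    (hq : ‖q‖ < 1) (hα : Summable α) (hG : ∀ n, Summable (G n)) (hP : ∀ n, P n ≠ 0)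
    (hβ : ∀ n, P n * β (n + 1) = β n)
    (h0 : β 0 = ∑' r, α r * (qPochInv q (-k r) * qPochInv q (k r + c)))
    (hcert : ∀ (n : ℕ) (r : ℤ),
      P n * (α r * (qPochInv q (n + 1 - k r) * qPochInv q (n + 1 + k r + c))) -
        α r * (qPochInv q (n - k r) * qPochInv q (n + k r + c)) = G n (r + 1) - G n r) :
    IsBaileyPair q c k α β := by
  intro n
  induction n with
  | zero => simpa using h0
  | succ n ih =>
    refine mul_left_cancel₀ (hP n) ?_
    rw [hβ, ih, Nat.cast_succ, ← tsum_mul_left]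
    have hsum (a b : ℤ → ℤ) := summable_mul_qPochInv_mul_qPochInv hq hα a b
    exact (tsum_eq_tsum_of_sub_telescopes ((hsum _ _).mul_left _) (hsum _ _) (hG n) (hcert n)).symm

lemma slater61_certificate (hq0 : q ≠ 0) (hq : ‖q‖ < 1) (n : ℕ) (r : ℤ) :
    (1 - q ^ (n + 1)) * (1 - q ^ (2 * n + 1)) *
        ((thetaTerm (q ^ 6) (-q ^ 2) r + thetaTerm (q ^ 6) (-q ^ 4) r) *
          (qPochInv q (n + 1 - 2 * r) * qPochInv q (n + 1 + 2 * r))) -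
      (thetaTerm (q ^ 6) (-q ^ 2) r + thetaTerm (q ^ 6) (-q ^ 4) r) *
        (qPochInv q (n - 2 * r) * qPochInv q (n + 2 * r)) =
    -q ^ (n + 1) * (thetaTerm (q ^ 6) (-1) (r + 1) *
        (qPochInv q (n + 1 - 2 * (r + 1)) * qPochInv q (n - 1 + 2 * (r + 1)))) -
      -q ^ (n + 1) * (thetaTerm (q ^ 6) (-1) r *
        (qPochInv q (n + 1 - 2 * r) * qPochInv q (n - 1 + 2 * r))) := by
  have hA := qPochInv_sub_one hq (n + 1 - 2 * r)
  have hA' := qPochInv_sub_one hq (n - 2 * r)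
  have hB := qPochInv_sub_one hq (n + 1 + 2 * r)
  have hB' := qPochInv_sub_one hq (n + 2 * r)
  rw [show (n : ℤ) + 1 - 2 * r - 1 = n - 2 * r by ring] at hA
  rw [show (n : ℤ) + 1 + 2 * r - 1 = n + 2 * r by ring] at hB
  rw [show (n : ℤ) + 1 - 2 * (r + 1) = n - 2 * r - 1 by ring,
    show (n : ℤ) - 1 + 2 * (r + 1) = n + 1 + 2 * r by ring,
    show (n : ℤ) - 1 + 2 * r = n + 2 * r - 1 by ring, hA', hA, hB', hB,
    thetaTerm_add_one (pow_ne_zero 6 hq0) (neg_ne_zero.mpr one_ne_zero),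
    thetaTerm_neg_pow, thetaTerm_neg_pow, pow_zpow_eq_zpow_pow]
  simp only [two_mul, zpow_add₀ hq0, zpow_sub₀ hq0, zpow_one, zpow_natCast]
  field_simp [zpow_ne_zero r hq0]
  ring

lemma isBaileyPair_slater61 (hq0 : q ≠ 0) (hq : ‖q‖ < 1) :
    IsBaileyPair q 0 (2 * ·) (thetaTerm (q ^ 6) (-q ^ 2))
      fun n ↦ qPoch (-q) q n / qPoch q q (2 * n) := by
  have hsum := summable_thetaTerm_neg_pow hq0 hq (a := 6) (by norm_num)
  have hreflect (r : ℤ) : thetaTerm (q ^ 6) (-q ^ 2) (-r) = thetaTerm (q ^ 6) (-q ^ 4) r := by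
    rw [thetaTerm_neg (pow_ne_zero 6 hq0), div_neg, div_eq_mul_inv,
      ← pow_sub₀ q hq0 (show 2 ≤ 6 by norm_num)]
  have hfactor {n : ℕ} (hn : n ≠ 0) : 1 - q ^ n ≠ 0 :=
    one_sub_ne_zero_of_norm_lt_one (norm_pow_lt_one hq hn)
  refine .of_add_comp hq (hsum 2) (Equiv.neg ℤ) (fun r ↦ by simp) ?_
  simp only [Equiv.neg_apply, hreflect]
  have hG (n : ℕ) : Summable fun r ↦ -q ^ (n + 1) * (thetaTerm (q ^ 6) (-1) r *
      (qPochInv q (n + 1 - 2 * r) * qPochInv q (n - 1 + 2 * r))) := by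
    simpa only [pow_zero] using (summable_mul_qPochInv_mul_qPochInv hq (hsum 0) _ _).mul_left _
  refine .of_certificate (P := fun n ↦ (1 - q ^ (n + 1)) * (1 - q ^ (2 * n + 1))) hq
    ((hsum 2).add (hsum 4)) hG (fun n ↦ mul_ne_zero (hfactor n.succ_ne_zero)
      (hfactor (2 * n).succ_ne_zero)) (fun n ↦ ?_) ?_
    fun n r ↦ by simpa only [add_zero] using slater61_certificate hq0 hq n r
  · have hden := qPoch_self_ne_zero hq (2 * n)
    have hodd : 1 - q ^ (2 * n + 1) ≠ 0 := hfactor (2 * n).succ_ne_zero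
    have heven : 1 - q ^ (2 * n + 1 + 1) ≠ 0 := hfactor (2 * n + 1).succ_ne_zero
    rw [mul_add_one, qPoch_succ, qPoch_succ, qPoch_succ, ← pow_succ', ← pow_succ']
    field_simp
    ring
  · rw [tsum_eq_single 0 fun r hr ↦ ?_]
    · norm_num [qPoch_zero]
    · rcases lt_or_gt_of_ne hr with hr | hr
      · rw [qPochInv_of_neg q (k := 2 * r + 0) (by lia), mul_zero, mul_zero]
      · rw [qPochInv_of_neg q (k := -(2 * r)) (by lia), zero_mul, mul_zero]

/-- A Wilf–Zeilberger certificate for the Bailey pair `isBaileyPair_rogersSelberg`. -/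
noncomputable def rogersSelbergCertificate (q : ℂ) (n : ℕ) (r : ℤ) : ℂ :=
  (q ^ (2 * n + 2) * (thetaTerm (q ^ 3) (-q ^ 3) r - thetaTerm (q ^ 3) (-1) r) +
      q ^ (4 * n + 4) * (thetaTerm (q ^ 3) (-q ^ 2) r - thetaTerm (q ^ 3) (-q) r)) *
    (qPochInv (q ^ 2) (n + 1 - r) * qPochInv (q ^ 2) (n + 1 + r))

lemma rogersSelberg_certificate (hq0 : q ≠ 0) (hq : ‖q‖ < 1) (n : ℕ) (r : ℤ) :
    (1 - q ^ (4 * n + 4)) * (1 + q ^ (2 * n + 3)) *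
        ((thetaTerm (q ^ 3) (-q ^ 2) r - q * thetaTerm (q ^ 3) (-q ^ 4) r) *
          (qPochInv (q ^ 2) (n + 1 - r) * qPochInv (q ^ 2) (n + 1 + r + 1))) -
      (thetaTerm (q ^ 3) (-q ^ 2) r - q * thetaTerm (q ^ 3) (-q ^ 4) r) *
        (qPochInv (q ^ 2) (n - r) * qPochInv (q ^ 2) (n + r + 1)) =
    rogersSelbergCertificate q n (r + 1) - rogersSelbergCertificate q n r := by
  have hA := qPochInv_sub_one (norm_pow_lt_one hq two_ne_zero) (n + 1 - r)
  have hB := qPochInv_sub_one (norm_pow_lt_one hq two_ne_zero) (n + r + 1 + 1)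
  have hB' := qPochInv_sub_one (norm_pow_lt_one hq two_ne_zero) (n + r + 1)
  have hstep (b : ℕ) : thetaTerm (q ^ 3) (-q ^ b) (r + 1) =
      -q ^ b * (q ^ r) ^ 3 * thetaTerm (q ^ 3) (-q ^ b) r := by
    rw [thetaTerm_add_one (pow_ne_zero 3 hq0) (neg_ne_zero.mpr (pow_ne_zero b hq0)),
      pow_zpow_eq_zpow_pow]
  rw [show (n : ℤ) + 1 - r - 1 = n - r by ring] at hA
  rw [show (n : ℤ) + r + 1 + 1 - 1 = n + r + 1 by ring] at hB
  have hstep0 := hstep 0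
  have hstep1 := hstep 1
  have hbase := thetaTerm_neg_pow (q ^ 3) q 1 r
  rw [pow_zero] at hstep0
  rw [pow_one] at hstep1 hbase
  rw [rogersSelbergCertificate, rogersSelbergCertificate,
    show (n : ℤ) + 1 - (r + 1) = n - r by ring,
    show (n : ℤ) + 1 + (r + 1) = n + r + 1 + 1 by ring,
    show (n : ℤ) + 1 + r + 1 = n + r + 1 + 1 by ring,
    show (n : ℤ) + 1 + r = n + r + 1 by ring, hA, hB, hstep, hstep, hstep0, hstep1, hbase]
  simp only [thetaTerm_neg_pow, pow_zpow_eq_zpow_pow, zpow_add₀ hq0, zpow_sub₀ hq0, zpow_one,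
    zpow_natCast]
  field_simp [zpow_ne_zero r hq0]
  ring

lemma summable_rogersSelbergCertificate (hq0 : q ≠ 0) (hq : ‖q‖ < 1) (n : ℕ) :
    Summable (rogersSelbergCertificate q n) := by
  have hsum := summable_thetaTerm_neg_pow hq0 hq three_ne_zero
  have hone := hsum 0
  have hself := hsum 1
  rw [pow_zero] at hone
  rw [pow_one] at hself
  exact summable_mul_qPochInv_mul_qPochInv (norm_pow_lt_one hq two_ne_zero)
    ((((hsum 3).sub hone).mul_left _).add (((hsum 2).sub hself).mul_left _)) _ _

lemma thetaTerm_cube_neg_sq_reflect (hq0 : q ≠ 0) (r : ℤ) :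
    thetaTerm (q ^ 3) (-q ^ 2) (-1 - r) = -(q * thetaTerm (q ^ 3) (-q ^ 4) r) := by
  rw [show -1 - r = -(r + 1) by ring, thetaTerm_neg (pow_ne_zero 3 hq0), div_neg,
    show q ^ 3 / q ^ 2 = q ^ 1 by field_simp, thetaTerm_add_one (pow_ne_zero 3 hq0) (by simpa),
    thetaTerm_neg_pow, thetaTerm_neg_pow, pow_zpow_eq_zpow_pow]
  ring

lemma rogersSelberg_recurrence (hq : ‖q‖ < 1) (n : ℕ) :
    (1 - q ^ (4 * n + 4)) * (1 + q ^ (2 * n + 3)) *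
        (qPoch q (q ^ 2) (n + 1 + 1) / qPoch (q ^ 2) (q ^ 2) (2 * (n + 1) + 1)) =
      qPoch q (q ^ 2) (n + 1) / qPoch (q ^ 2) (q ^ 2) (2 * n + 1) := by
  have hden := qPoch_self_ne_zero (norm_pow_lt_one hq two_ne_zero) (2 * n + 1)
  have hfactor {m : ℕ} (hm : m ≠ 0) : 1 - q ^ m ≠ 0 :=
    one_sub_ne_zero_of_norm_lt_one (norm_pow_lt_one hq hm)
  have hfst : 1 - q ^ (4 * n + 4) ≠ 0 := hfactor (by lia)
  have hsnd : 1 - q ^ (4 * n + 6) ≠ 0 := hfactor (by lia)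
  have hsplit : 1 - q ^ (4 * n + 6) = (1 - q ^ (2 * n + 3)) * (1 + q ^ (2 * n + 3)) := by ring
  rw [show 2 * (n + 1) + 1 = 2 * n + 1 + 1 + 1 by ring, qPoch_succ q,
    qPoch_succ (q ^ 2) _ (_ + 1), qPoch_succ (q ^ 2) _ (2 * n + 1), ← pow_mul, ← pow_mul,
    ← pow_mul, ← pow_succ', ← pow_add, ← pow_add, show 2 * (n + 1) + 1 = 2 * n + 3 by ring,
    show 2 + 2 * (2 * n + 1) = 4 * n + 4 by ring, show 2 + 2 * (2 * n + 1 + 1) = 4 * n + 6 by ring]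
  field_simp
  rw [hsplit]
  ring

lemma isBaileyPair_rogersSelberg (hq0 : q ≠ 0) (hq : ‖q‖ < 1) :
    IsBaileyPair (q ^ 2) 1 (fun r ↦ r) (thetaTerm (q ^ 3) (-q ^ 2))
      fun n ↦ qPoch q (q ^ 2) (n + 1) / qPoch (q ^ 2) (q ^ 2) (2 * n + 1) := by
  have hq2 := norm_pow_lt_one hq two_ne_zero
  have hsum := summable_thetaTerm_neg_pow hq0 hq three_ne_zero
  have hP (n : ℕ) : (1 - q ^ (4 * n + 4)) * (1 + q ^ (2 * n + 3)) ≠ 0 :=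
    mul_ne_zero (one_sub_ne_zero_of_norm_lt_one (norm_pow_lt_one hq (by lia)))
      (one_add_ne_zero_of_norm_lt_one (norm_pow_lt_one hq (by lia)))
  refine .of_add_comp hq2 (hsum 2) (Equiv.subLeft (-1)) (fun r ↦ rfl) ?_
  simp only [Equiv.subLeft_apply, thetaTerm_cube_neg_sq_reflect hq0, ← sub_eq_add_neg]
  refine .of_certificate hq2 ((hsum 2).sub ((hsum 4).mul_left q))
    (summable_rogersSelbergCertificate hq0 hq) hP (fun n ↦ ?_) ?_
    (rogersSelberg_certificate hq0 hq)
  · rw [mul_left_comm, rogersSelberg_recurrence hq]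
  · have hone : qPochInv (q ^ 2) 1 = (1 - q ^ 2)⁻¹ := by
      simpa [qPoch] using qPochInv_natCast (q ^ 2) 1
    have hzero := thetaTerm_cube_neg_sq_reflect hq0 0
    have hneg_one := thetaTerm_cube_neg_sq_reflect hq0 (-1)
    rw [sub_zero, thetaTerm_zero, mul_one] at hzero
    rw [sub_self, thetaTerm_zero] at hneg_one
    rw [tsum_eq_sum (s := {0, -1}) fun r hr ↦ ?_]
    · rw [Finset.sum_pair (by norm_num), hzero, sub_eq_add_neg (-q), ← hneg_one]
      norm_num [qPoch, hone]
      ring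
    · rw [Finset.mem_insert, Finset.mem_singleton, not_or] at hr
      rcases lt_or_gt_of_ne hr.1 with h | h
      · rw [qPochInv_of_neg _ (k := r + 1) (by lia), mul_zero, mul_zero]
      · rw [qPochInv_of_neg _ (k := -r) (by lia), zero_mul, mul_zero]

/-- Identity (61) in Slater's list of identities of Rogers–Ramanujan type. -/
theorem slater61 (hq0 : q ≠ 0) (hq : ‖q‖ < 1) :
    ∑' n : ℕ, q ^ (n * n) * (qPoch (-q) q n / qPoch q q (2 * n)) =
      theta (q ^ 14) (-q ^ 6) * (qPochInf q q)⁻¹ := by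
  have h := (isBaileyPair_slater61 hq0 hq).tsum_eq hq0 hq zero_le_one
    (summable_thetaTerm_neg_pow hq0 hq (by norm_num) 2)
  have hterm (r : ℤ) : q ^ (2 * r * (2 * r)) * thetaTerm (q ^ 6) (-q ^ 2) r =
      thetaTerm (q ^ 14) (-q ^ 6) r := by
    have hpow : q ^ (2 * r * (2 * r)) = thetaTerm (q ^ 8) (q ^ 4) r := by
      rw [show 2 * r * (2 * r) = ((4 : ℕ) : ℤ) * (r * (r + 0)) by push_cast; ring, zpow_mul,
        zpow_natCast, zpow_mul_add_eq_thetaTerm (pow_ne_zero 4 hq0), zero_add, zpow_one,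
        ← pow_mul]
    rw [hpow, thetaTerm_mul_thetaTerm]
    ring_nf
  simp only [add_zero, hterm, ← Nat.cast_mul, zpow_natCast] at h
  exact h

/-- One of the three Rogers–Selberg identities modulo 7. -/
theorem rogersSelberg (hq0 : q ≠ 0) (hq : ‖q‖ < 1) :
    ∑' n : ℕ, (q ^ 2) ^ (n * (n + 1)) *
        (qPoch q (q ^ 2) (n + 1) / qPoch (q ^ 2) (q ^ 2) (2 * n + 1)) =
      theta (q ^ 7) (-q ^ 6) * (qPochInf (q ^ 2) (q ^ 2))⁻¹ := by
  have h := (isBaileyPair_rogersSelberg hq0 hq).tsum_eq (pow_ne_zero 2 hq0)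
    (norm_pow_lt_one hq two_ne_zero) le_rfl (summable_thetaTerm_neg_pow hq0 hq three_ne_zero 2)
  have hterm (r : ℤ) : (q ^ 2) ^ (r * (r + 1)) * thetaTerm (q ^ 3) (-q ^ 2) r =
      thetaTerm (q ^ 7) (-q ^ 6) r := by
    rw [zpow_mul_add_eq_thetaTerm (pow_ne_zero 2 hq0), thetaTerm_mul_thetaTerm]
    norm_num
    ring_nf
  simp only [hterm] at h
  exact_mod_cast h

end BaileyPairs

section QuadrupleSum

variable {q x : ℂ}

/-- The product `(-x; q)_∞ (-q / x; q)_∞ (-1 / x; q)_∞` of three Euler sums. -/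
noncomputable def tripleProd (q x : ℂ) : ℂ :=
  qPochInf (-x) q * (qPochInf (-(q / x)) q * qPochInf (-x⁻¹) q)

lemma sq_mul_tripleProd_mul (hq0 : q ≠ 0) (hq : ‖q‖ < 1) (hx : x ≠ 0) :
    x ^ 2 * q * tripleProd q (x * q) = (1 + x * q) * tripleProd q x := by
  have hfst := qPochInf_eq_mul (-x) hq
  have hsnd := qPochInf_eq_mul (-x⁻¹) hq
  have htrd := qPochInf_eq_mul (-(x * q)⁻¹) hq
  rw [neg_mul] at hfst
  rw [show -x⁻¹ * q = -(q / x) by ring] at hsnd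
  rw [show -(x * q)⁻¹ * q = -x⁻¹ by field_simp] at htrd
  rw [tripleProd, tripleProd, show q / (x * q) = x⁻¹ by field_simp, htrd, hsnd, hfst]
  field_simp
  ring

lemma pow_mul_tripleProd_add_two_mul (hq0 : q ≠ 0) (hq : ‖q‖ < 1) (l m : ℕ) :
    q ^ ((l + 2 * m) * (l + 2 * m)) * tripleProd (q ^ 2) (q ^ (l + 2 * m)) =
      (q ^ 2) ^ (m * (m + l)) * qPoch (-q ^ (l + 2)) (q ^ 2) m *
        (q ^ (l * l) * tripleProd (q ^ 2) (q ^ l)) := by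
  induction m with
  | zero => simp
  | succ m ih =>
    have hrec := sq_mul_tripleProd_mul (pow_ne_zero 2 hq0) (norm_pow_lt_one hq two_ne_zero)
      (pow_ne_zero (l + 2 * m) hq0)
    rw [show l + 2 * (m + 1) = l + 2 * m + 2 by ring, pow_add q (l + 2 * m) 2, qPoch_succ]
    linear_combination q ^ ((l + 2 * m) * (l + 2 * m) + 2 * (l + 2 * m) + 2) * hrec +
      q ^ (2 * (l + 2 * m) + 2) * (1 + q ^ (l + 2 * m + 2)) * ih

lemma tripleProd_one (hq : ‖q‖ < 1) : tripleProd q 1 = 4 * qPochInf (-q) q ^ 3 := by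
  have h := qPochInf_eq_mul (-1) hq
  rw [neg_one_mul] at h
  rw [tripleProd, div_one, inv_one, h]
  ring

lemma mul_tripleProd_sq (hq0 : q ≠ 0) (hq : ‖q‖ < 1) :
    q * tripleProd (q ^ 2) q = (1 + q) * qPochInf (-q) (q ^ 2) ^ 3 := by
  have h := qPochInf_eq_mul (-q⁻¹) (norm_pow_lt_one hq two_ne_zero)
  rw [show -q⁻¹ * q ^ 2 = -q by field_simp] at h
  rw [tripleProd, show q ^ 2 / q = q by field_simp, h]
  field_simp
  ring

/-- The sum of the quadruple series over `i`, `j` and `k` for a fixed value of `l`. -/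
noncomputable def quadFiber (q : ℂ) (l : ℕ) : ℂ :=
  q ^ (l * l) * tripleProd (q ^ 2) (q ^ l) * qPochInv (q ^ 2) l

lemma quadFiber_even (hq0 : q ≠ 0) (hq : ‖q‖ < 1) (m : ℕ) :
    quadFiber q (2 * m) = 4 * qPochInf (-q ^ 2) (q ^ 2) ^ 3 *
      ((q ^ 2) ^ (m * m) * (qPoch (-q ^ 2) (q ^ 2) m / qPoch (q ^ 2) (q ^ 2) (2 * m))) := by
  have h := pow_mul_tripleProd_add_two_mul hq0 hq 0 m
  simp only [zero_add, add_zero, mul_zero, pow_zero, one_mul,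
    tripleProd_one (norm_pow_lt_one hq two_ne_zero)] at h
  rw [quadFiber, h, qPochInv_natCast]
  ring

lemma quadFiber_odd (hq0 : q ≠ 0) (hq : ‖q‖ < 1) (m : ℕ) :
    quadFiber q (2 * m + 1) = qPochInf (-q) (q ^ 2) ^ 3 * ((q ^ 2) ^ (m * (m + 1)) *
      (qPoch (-q) (q ^ 2) (m + 1) / qPoch (q ^ 2) (q ^ 2) (2 * m + 1))) := by
  have h := pow_mul_tripleProd_add_two_mul hq0 hq 1 m
  rw [one_mul, pow_one, mul_tripleProd_sq hq0 hq, add_comm 1] at h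
  rw [quadFiber, h, qPochInv_natCast, qPoch_succ_eq_mul (-q), neg_mul, ← pow_succ', add_comm 2]
  ring

/-- The exponent of `q` in the quadruple sum. -/
def quadExponent (i j k l : ℤ) : ℤ :=
  i ^ 2 + j ^ 2 + k ^ 2 + l ^ 2 + i * l - j * l - k * l - i + j - k

lemma le_quadExponent {i l : ℤ} (hi : 0 ≤ i) (hl : 0 ≤ l) (j k : ℤ) :
    i + j + k + l - 5 ≤ quadExponent i j k l := by
  rw [quadExponent]
  linarith [mul_nonneg hi hl, sq_nonneg (2 * j - l), sq_nonneg (2 * k - l - 2),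
    sq_nonneg (l - 2), sq_nonneg (i - 1)]

/-- The summand of the quadruple sum. -/
noncomputable def quadTerm (q : ℂ) (i j k l : ℕ) : ℂ :=
  q ^ quadExponent i j k l / (qPoch (q ^ 2) (q ^ 2) i * qPoch (q ^ 2) (q ^ 2) j *
    qPoch (q ^ 2) (q ^ 2) k * qPoch (q ^ 2) (q ^ 2) l)

lemma quadTerm_eq (q : ℂ) (i j k l : ℕ) :
    quadTerm q i j k l = q ^ quadExponent i j k l * qPochInv (q ^ 2) i * qPochInv (q ^ 2) j *
      qPochInv (q ^ 2) k * qPochInv (q ^ 2) l := by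
  simp only [quadTerm, qPochInv_natCast]
  ring

lemma summable_zpow_quadExponent (hq0 : q ≠ 0) (hq : ‖q‖ < 1) :
    Summable fun p : ℕ × ℕ × ℕ × ℕ ↦ q ^ quadExponent p.1 p.2.1 p.2.2.1 p.2.2.2 := by
  have hnorm : 0 < ‖q‖ := norm_pos_iff.mpr hq0
  have hgeom : Summable fun n : ℕ ↦ ‖q‖ ^ n := summable_geometric_of_lt_one (norm_nonneg q) hq
  have hgeom' := hgeom.mul_of_nonneg (hgeom.mul_of_nonneg (hgeom.mul_of_nonneg hgeom
    (fun _ ↦ by positivity) fun _ ↦ by positivity) (fun _ ↦ by positivity) fun _ ↦ by positivity)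
    (fun _ ↦ by positivity) fun _ ↦ by positivity
  refine .of_norm_bounded (hgeom'.mul_left (‖q‖ ^ (-5 : ℤ))) fun ⟨i, j, k, l⟩ ↦ ?_
  calc ‖q ^ quadExponent i j k l‖
      ≤ ‖q‖ ^ ((i : ℤ) + j + k + l - 5) := by
        rw [norm_zpow]
        exact zpow_le_zpow_right_of_le_one₀ hnorm hq.le
          (le_quadExponent (Int.natCast_nonneg i) (Int.natCast_nonneg l) j k)
    _ = ‖q‖ ^ (-5 : ℤ) * (‖q‖ ^ i * (‖q‖ ^ j * (‖q‖ ^ k * ‖q‖ ^ l))) := by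
        simp only [← zpow_natCast, ← zpow_add₀ hnorm.ne']
        ring_nf

lemma summable_quadTerm (hq0 : q ≠ 0) (hq : ‖q‖ < 1) :
    Summable fun p : ℕ × ℕ × ℕ × ℕ ↦ quadTerm q p.1 p.2.1 p.2.2.1 p.2.2.2 := by
  have hq2 := norm_pow_lt_one hq two_ne_zero
  simp only [quadTerm_eq]
  exact summable_mul_qPochInv hq2 (summable_mul_qPochInv hq2 (summable_mul_qPochInv hq2
    (summable_mul_qPochInv hq2 (summable_zpow_quadExponent hq0 hq) _) _) _) _

/-- The `n`-th term of Euler's expansion of `(-z; q)_∞`. -/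
noncomputable def eulerTerm (q z : ℂ) (n : ℕ) : ℂ := thetaTerm q z n * qPochInv q n

lemma summable_eulerTerm (hq0 : q ≠ 0) (hq : ‖q‖ < 1) (hx : x ≠ 0) : Summable (eulerTerm q x) :=
  summable_mul_qPochInv hq (summable_thetaTerm_natCast hq0 hq hx) _

lemma hasSum_eulerTerm (hq0 : q ≠ 0) (hq : ‖q‖ < 1) (hx : x ≠ 0) :
    HasSum (eulerTerm q x) (qPochInf (-x) q) := by
  rw [← tsum_thetaTerm_mul_qPochInv hq0 hq hx, ← tsum_natCast_thetaTerm_mul_qPochInv]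
  exact (summable_eulerTerm hq0 hq hx).hasSum

lemma hasSum_eulerTerm_mul_eulerTerm_mul_eulerTerm (hq0 : q ≠ 0) (hq : ‖q‖ < 1) (hx : x ≠ 0) :
    HasSum (fun p : ℕ × ℕ × ℕ ↦
      eulerTerm q x p.1 * (eulerTerm q (q / x) p.2.1 * eulerTerm q x⁻¹ p.2.2))
      (tripleProd q x) :=
  hasSum_mul (g := fun p : ℕ × ℕ ↦ eulerTerm q (q / x) p.1 * eulerTerm q x⁻¹ p.2)
    (hasSum_eulerTerm hq0 hq hx) (hasSum_mul (hasSum_eulerTerm hq0 hq (div_ne_zero hq0 hx))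
      (hasSum_eulerTerm hq0 hq (inv_ne_zero hx)))

lemma quadTerm_eq_mul_eulerTerm (hq0 : q ≠ 0) (i j k l : ℕ) :
    quadTerm q i j k l = q ^ (l * l) * qPochInv (q ^ 2) l * (eulerTerm (q ^ 2) (q ^ l) i *
      (eulerTerm (q ^ 2) (q ^ 2 / q ^ l) j * eulerTerm (q ^ 2) (q ^ l)⁻¹ k)) := by
  have hsplit : quadExponent i j k l = l * l + (2 * tri i + l * i) +
      (2 * tri j + (2 - l) * j) + (2 * tri k + -l * k) := by
    rw [quadExponent]
    linear_combination -two_mul_tri i - two_mul_tri j - two_mul_tri k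
  have hpow : q ^ quadExponent i j k l = q ^ (l * l) * thetaTerm (q ^ 2) (q ^ l) i *
      thetaTerm (q ^ 2) (q ^ 2 / q ^ l) j * thetaTerm (q ^ 2) (q ^ l)⁻¹ k := by
    simp only [hsplit, thetaTerm, zpow_add₀ hq0, zpow_mul, zpow_sub₀ hq0, zpow_neg]
    norm_cast
    ring
  simp only [quadTerm_eq, eulerTerm, hpow]
  ring

lemma hasSum_quadFiber (hq0 : q ≠ 0) (hq : ‖q‖ < 1) :
    HasSum (quadFiber q) (∑' p : ℕ × ℕ × ℕ × ℕ, quadTerm q p.1 p.2.1 p.2.2.1 p.2.2.2) := by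
  let e : ℕ × ℕ × ℕ × ℕ ≃ ℕ × ℕ × ℕ × ℕ :=
    { toFun := fun p ↦ (p.2.1, p.2.2.1, p.2.2.2, p.1)
      invFun := fun p ↦ (p.2.2.2, p.1, p.2.1, p.2.2.1)
      left_inv := fun _ ↦ rfl
      right_inv := fun _ ↦ rfl }
  refine (e.hasSum_iff.mpr (summable_quadTerm hq0 hq).hasSum).prod_fiberwise fun l ↦ ?_
  simp only [e, Function.comp_apply, Equiv.coe_fn_mk, quadTerm_eq_mul_eulerTerm hq0]
  rw [quadFiber, mul_right_comm]
  exact (hasSum_eulerTerm_mul_eulerTerm_mul_eulerTerm (pow_ne_zero 2 hq0)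
    (norm_pow_lt_one hq two_ne_zero) (pow_ne_zero l hq0)).mul_left _

end QuadrupleSum

section ThetaQuotients

variable {q : ℂ}

lemma qPochInf_pow_eq_mul (hq : ‖q‖ < 1) {m : ℕ} (hm : m ≠ 0) (a : ℕ) :
    qPochInf (q ^ a) (q ^ m) =
      qPochInf (q ^ a) (q ^ (2 * m)) * qPochInf (q ^ (a + m)) (q ^ (2 * m)) := by
  rw [qPochInf_eq_prod _ (norm_pow_lt_one hq hm) two_ne_zero, Finset.prod_range_succ,
    Finset.prod_range_one, pow_zero, mul_one, pow_one, ← pow_add, ← pow_mul, mul_comm m]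

lemma J_ne_zero (hq : ‖q‖ < 1) {m : ℕ} (hm : m ≠ 0) : J q m ≠ 0 :=
  qPochInf_ne_zero (norm_pow_lt_one hq hm) (norm_pow_lt_one hq hm)

lemma Jam_ne_zero (hq : ‖q‖ < 1) {a m : ℕ} (ha : a ≠ 0) (ham : a < m) : Jam q a m ≠ 0 := by
  have hm : m ≠ 0 := by lia
  have hqm := norm_pow_lt_one hq hm
  exact mul_ne_zero (mul_ne_zero (qPochInf_ne_zero (norm_pow_lt_one hq ha) hqm)
    (qPochInf_ne_zero (norm_pow_lt_one hq (by lia)) hqm)) (J_ne_zero hq hm)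

lemma qPochInf_neg_mul_J (hq : ‖q‖ < 1) {m : ℕ} (hm : m ≠ 0) :
    qPochInf (-q ^ m) (q ^ m) * J q m = J q (2 * m) := by
  rw [mul_comm, J, qPochInf_mul_qPochInf_neg _ (norm_pow_lt_one hq hm), ← pow_mul, mul_comm m, J]

lemma qPochInf_neg_mul_J_mul_J (hq : ‖q‖ < 1) :
    qPochInf (-q) (q ^ 2) * (J q 1 * J q 4) = J q 2 ^ 2 := by
  have hJ1 := qPochInf_pow_eq_mul hq one_ne_zero 1
  have hJ2 := qPochInf_pow_eq_mul hq two_ne_zero 2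
  have hsq := qPochInf_mul_qPochInf_neg q (norm_pow_lt_one hq two_ne_zero)
  norm_num [← pow_mul] at hJ1 hJ2 hsq
  simp only [J, pow_one]
  linear_combination qPochInf (-q) (q ^ 2) * qPochInf (q ^ 4) (q ^ 4) * hJ1 +
    qPochInf (q ^ 2) (q ^ 2) * qPochInf (q ^ 4) (q ^ 4) * hsq - qPochInf (q ^ 2) (q ^ 2) * hJ2

lemma qPochInf_neg_mul_Jam (hq : ‖q‖ < 1) {m : ℕ} (hm : m ≠ 0) :
    qPochInf (-q ^ m) (q ^ (2 * m)) * Jam q m (2 * (2 * m)) = J q (2 * m) := by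
  have hm' : 2 * m ≠ 0 := by lia
  have hpm := qPochInf_mul_qPochInf_neg (q ^ m) (norm_pow_lt_one hq hm')
  rw [qPochInf_pow_eq_mul hq hm', ← pow_mul, ← pow_mul, mul_comm m, mul_comm (2 * m) 2] at hpm
  rw [J, qPochInf_pow_eq_mul hq hm', ← two_mul, ← hpm, Jam,
    show 2 * (2 * m) - m = m + 2 * m by lia]
  ring

lemma Jam_add_mul_J_sq (hq : ‖q‖ < 1) {a b : ℕ} (hab : a + b ≠ 0) :
    Jam q a (a + b) * J q (2 * (a + b)) ^ 2 =
      Jam q a (2 * (a + b)) * Jam q b (2 * (a + b)) * J q (a + b) := by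
  rw [Jam, Jam, Jam, add_tsub_cancel_left, show 2 * (a + b) - a = b + (a + b) by lia,
    show 2 * (a + b) - b = a + (a + b) by lia, qPochInf_pow_eq_mul hq hab a,
    qPochInf_pow_eq_mul hq hab b, J, J]
  ring

lemma qPochInf_neg_mul_qPochInf_neg_mul_Jam_mul_Jam (hq : ‖q‖ < 1) {a b : ℕ} (hab : a + b ≠ 0) :
    qPochInf (-q ^ a) (q ^ (a + b)) * qPochInf (-q ^ b) (q ^ (a + b)) *
        (Jam q a (2 * (a + b)) * Jam q b (2 * (a + b))) =
      Jam q (2 * a) (2 * (a + b)) * J q (2 * (a + b)) := by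
  have hpm (c : ℕ) := qPochInf_mul_qPochInf_neg (q ^ c) (norm_pow_lt_one hq hab)
  simp only [← pow_mul, mul_comm _ 2] at hpm
  have ha := hpm a
  have hb := hpm b
  rw [qPochInf_pow_eq_mul hq hab] at ha hb
  rw [Jam, Jam, Jam, show 2 * (a + b) - a = b + (a + b) by lia,
    show 2 * (a + b) - b = a + (a + b) by lia, show 2 * (a + b) - 2 * a = 2 * b by lia,
    ← ha, ← hb, J]
  ring

lemma Jam_neg_six_seven (hq : ‖q‖ < 1) :
    Jam (-q) 6 7 = Jam q 6 14 *
      (qPochInf (-q) (q ^ 14) * qPochInf (-q ^ 13) (q ^ 14)) * qPochInf (-q ^ 7) (q ^ 14) := by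
  have hsplit := qPochInf_pow_eq_mul (q := -q) (by rwa [norm_neg]) (m := 7) (by norm_num)
  rw [Jam, hsplit, hsplit, hsplit, Jam]
  norm_num [Even.neg_pow, Odd.neg_pow]
  ring

lemma J_two_mul_J_pow (hq : ‖q‖ < 1) :
    J q 2 * J q 28 ^ 6 = Jam q 2 28 * Jam q 4 28 * Jam q 6 28 * Jam q 8 28 * Jam q 10 28 *
      Jam q 12 28 * J q 14 := by
  have hJ2 := qPochInf_eq_prod (q ^ 2) (norm_pow_lt_one hq two_ne_zero) (k := 14) (by norm_num)
  have hJ14 := qPochInf_pow_eq_mul hq (m := 14) (by norm_num) 14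
  simp only [Finset.prod_range_succ, Finset.prod_range_zero, ← pow_mul, ← pow_add] at hJ2
  norm_num at hJ2 hJ14
  norm_num [Jam, J]
  rw [hJ2, hJ14]
  ring

lemma Jam_neg_six_seven_mul (hq : ‖q‖ < 1) :
    Jam (-q) 6 7 * (Jam q 1 28 * Jam q 4 28 * Jam q 7 28 * Jam q 10 28 * Jam q 12 28 *
      Jam q 13 28) = J q 2 * J q 14 * J q 28 ^ 5 := by
  have h7 := qPochInf_neg_mul_Jam hq (m := 7) (by norm_num)
  have h6 := Jam_add_mul_J_sq hq (a := 6) (b := 8) (by norm_num)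
  have h1 := qPochInf_neg_mul_qPochInf_neg_mul_Jam_mul_Jam hq (a := 1) (b := 13) (by norm_num)
  norm_num at h7 h6 h1
  refine mul_right_cancel₀ (pow_ne_zero 2 (J_ne_zero hq (m := 28) (by norm_num))) ?_
  rw [Jam_neg_six_seven hq]
  calc
    _ = (Jam q 6 14 * J q 28 ^ 2) * (qPochInf (-q) (q ^ 14) * qPochInf (-q ^ 13) (q ^ 14) *
          (Jam q 1 28 * Jam q 13 28)) * (qPochInf (-q ^ 7) (q ^ 14) * Jam q 7 28) *
          (Jam q 4 28 * Jam q 10 28 * Jam q 12 28) := by ring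
    _ = (J q 2 * J q 28 ^ 6) * (J q 14 * J q 28) := by
      rw [h6, h1, h7, J_two_mul_J_pow hq]
      ring
    _ = _ := by ring

end ThetaQuotients

section Dissection

variable {q : ℂ}

lemma tsum_quadFiber_even (hq0 : q ≠ 0) (hq : ‖q‖ < 1) :
    ∑' m, quadFiber q (2 * m) = 4 * J q 4 ^ 3 * Jam q 12 28 / J q 2 ^ 4 := by
  have hJ := qPochInf_neg_mul_J hq two_ne_zero
  have hJ2 := J_ne_zero hq two_ne_zero
  have hq2 := norm_pow_lt_one hq two_ne_zero
  have htheta : theta ((q ^ 2) ^ 14) (-(q ^ 2) ^ 6) = Jam q 12 28 := by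
    rw [Jam_eq_theta hq0 hq (by norm_num) (by norm_num), ← pow_mul, ← pow_mul]
  simp_rw [quadFiber_even hq0 hq]
  rw [tsum_mul_left, slater61 (pow_ne_zero 2 hq0) hq2, htheta, ← hJ]
  change 4 * _ * (_ * (J q 2)⁻¹) = _
  field_simp

lemma tsum_quadFiber_odd (hq0 : q ≠ 0) (hq : ‖q‖ < 1) :
    ∑' m, quadFiber q (2 * m + 1) = J q 2 ^ 6 * J q 14 * J q 28 ^ 5 /
      (J q 1 ^ 3 * J q 4 ^ 3 * Jam q 1 28 * Jam q 4 28 * Jam q 7 28 * Jam q 10 28 *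
        Jam q 12 28 * Jam q 13 28) := by
  have hJ {m : ℕ} (hm : m ≠ 0) := J_ne_zero hq hm
  have hJam {a : ℕ} (ha : a ≠ 0) (ha28 : a < 28) := Jam_ne_zero hq ha ha28
  have hnegq0 := neg_ne_zero.mpr hq0
  have hnegq : ‖-q‖ < 1 := by rwa [norm_neg]
  have hprod : qPochInf (-q) (q ^ 2) = J q 2 ^ 2 / (J q 1 * J q 4) :=
    eq_div_of_mul_eq (by simp [hJ]) (qPochInf_neg_mul_J_mul_J hq)
  have hJam_neg := eq_div_of_mul_eq (by simp [hJam]) (Jam_neg_six_seven_mul hq)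
  have hsum := rogersSelberg hnegq0 hnegq
  rw [neg_sq, ← Jam_eq_theta hnegq0 hnegq (by norm_num) (by norm_num), hJam_neg] at hsum
  simp_rw [quadFiber_odd hq0 hq]
  rw [tsum_mul_left, hsum, hprod]
  change _ * (_ * (J q 2)⁻¹) = _
  have hJ2 := hJ two_ne_zero
  field_simp

end Dissection

theorem stmt_16 (q : ℂ) (h0 : 0 < ‖q‖) (h1 : ‖q‖ < 1) :
    (∑' p : ℕ × ℕ × ℕ × ℕ,
      (fun (i j k l : ℕ) =>
        q ^ (((i:ℤ)^2 + (j:ℤ)^2 + (k:ℤ)^2 + (l:ℤ)^2 + (i:ℤ)*(l:ℤ) - (j:ℤ)*(l:ℤ) - (k:ℤ)*(l:ℤ) - (i:ℤ) + (j:ℤ) - (k:ℤ)) : ℤ) /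
          (qPoch (q ^ 2) (q ^ 2) i * qPoch (q ^ 2) (q ^ 2) j * qPoch (q ^ 2) (q ^ 2) k * qPoch (q ^ 2) (q ^ 2) l))
        p.1 p.2.1 p.2.2.1 p.2.2.2)
    = 4 * (J q 4)^3 * Jam q 12 28 / (J q 2)^4
      + (J q 2)^6 * J q 14 * (J q 28)^5 /
        ((J q 1)^3 * (J q 4)^3 * Jam q 1 28 * Jam q 4 28 * Jam q 7 28 *
          Jam q 10 28 * Jam q 12 28 * Jam q 13 28) := by
  have hq0 : q ≠ 0 := norm_pos_iff.mp h0
  have hsum := hasSum_quadFiber hq0 h1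
  calc
    _ = ∑' l, quadFiber q l := hsum.tsum_eq.symm
    _ = ∑' m, quadFiber q (2 * m) + ∑' m, quadFiber q (2 * m + 1) :=
      (tsum_even_add_odd
        (hsum.summable.comp_injective fun _ _ h ↦ by simpa using h)
        (hsum.summable.comp_injective fun _ _ h ↦ by simpa using h)).symm
    _ = _ := by rw [tsum_quadFiber_even hq0 h1, tsum_quadFiber_odd hq0 h1]
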